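/- Assume ĥ_k ≠ 0. Let P and Q be power vectors with strictly positive entries such that Q_j = P_j for all j ≠ k and Q_k > P_k. Then SINR_k(Q) > SINR_k(P); that is, the uplink SINR of user k is strictly increasing in user k's own transmit power. (First part of the competitiveness condition of a competitive utility function.) -/

import Mathlib

open Matrix Finset
open scoped ComplexOrder

noncomputable section

/-- Estimation-error-plus-noise covariance `D(P) = Σⱼ Pⱼ Eⱼ + C_z`. -/
def Dmat {K n : ℕ} (E : Fin K → Matrix (Fin n) (Fin n) ℂ)
    (Cz : Matrix (Fin n) (Fin n) ℂ) (P : Fin K → ℝ) : Matrix (Fin n) (Fin n) ℂ :=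
  (∑ j, (P j : ℂ) • E j) + Cz

/-- Interference-plus-noise covariance of user `k`:
`Ω_k(P) = Σ_{k'≠k} P_{k'} hhat_{k'} hhat_{k'}ᴴ + D(P)`. -/
def Omat {K n : ℕ} (hhat : Fin K → Fin n → ℂ) (E : Fin K → Matrix (Fin n) (Fin n) ℂ)
    (Cz : Matrix (Fin n) (Fin n) ℂ) (k : Fin K) (P : Fin K → ℝ) :
    Matrix (Fin n) (Fin n) ℂ :=
  (∑ k' ∈ Finset.univ.erase k, (P k' : ℂ) • vecMulVec (hhat k') (star (hhat k'))) +
    Dmat E Cz P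

/-- Uplink SINR of user `k`: `SINR_k(P) = P_k · hhat_kᴴ Ω_k(P)⁻¹ hhat_k`. -/
def SINR {K n : ℕ} (hhat : Fin K → Fin n → ℂ) (E : Fin K → Matrix (Fin n) (Fin n) ℂ)
    (Cz : Matrix (Fin n) (Fin n) ℂ) (k : Fin K) (P : Fin K → ℝ) : ℝ :=
  P k * (star (hhat k) ⬝ᵥ (Omat hhat E Cz k P)⁻¹ *ᵥ hhat k).re

/-!
User `k`'s power `p` enters `Ω_k` only through its own estimation error: `Ω_k = R + p E` with
`R` positive definite and `E = E_k` positive semidefinite. For `0 ≤ p < q`,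
`q (R + q E)⁻¹ - p (R + p E)⁻¹ = (q - p) ((R + p E) R⁻¹ (R + q E))⁻¹`,
and the matrix inverted on the right is positive definite because it expands to
`R + (p + q) E + p q E R⁻¹ E`. So `p (R + p E)⁻¹` is strictly increasing in the positive definite
order, and with it its quadratic form at `hhat k ≠ 0`.
-/

section Matrix

variable {ι 𝕜 : Type*} [Fintype ι] [DecidableEq ι] [Field 𝕜] {R E : Matrix ι ι 𝕜} {p q : 𝕜}

theorem smul_inv_add_smul_sub_smul_inv_add_smul (hR : IsUnit R) (hp : IsUnit (R + p • E))
    (hq : IsUnit (R + q • E)) :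
    q • (R + q • E)⁻¹ - p • (R + p • E)⁻¹ = (q - p) • ((R + p • E) * R⁻¹ * (R + q • E))⁻¹ := by
  rw [isUnit_iff_isUnit_det] at hR hp hq
  set X := R + p • E with hX
  set Y := R + q • E with hY
  have cross_difference : q • X - p • Y = (q - p) • R := by
    rw [hX, hY]
    module
  calc
    q • Y⁻¹ - p • X⁻¹ = Y⁻¹ * (q • X - p • Y) * X⁻¹ := by
      simp only [mul_sub, sub_mul, mul_smul_comm, smul_mul_assoc, nonsing_inv_mul _ hq, one_mul,
        mul_nonsing_inv_cancel_right _ _ hp]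
    _ = (q - p) • (X * R⁻¹ * Y)⁻¹ := by
      rw [cross_difference, mul_smul_comm, smul_mul_assoc, Matrix.mul_inv_rev, Matrix.mul_inv_rev,
        nonsing_inv_nonsing_inv _ hR, Matrix.mul_assoc]

variable [PartialOrder 𝕜] [StarRing 𝕜] [StarOrderedRing 𝕜]

theorem posDef_add_smul_mul_inv_mul_add_smul (hR : R.PosDef) (hE : E.PosSemidef)
    (hp : 0 ≤ p) (hq : 0 ≤ q) : ((R + p • E) * R⁻¹ * (R + q • E)).PosDef := by
  have hR_det : IsUnit R.det := (isUnit_iff_isUnit_det R).1 hR.isUnit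
  have expansion :
      (R + p • E) * R⁻¹ * (R + q • E) = R + ((p + q) • E + (p * q) • (E * R⁻¹ * E)) := by
    simp only [add_mul, mul_add, mul_smul_comm, smul_mul_assoc, mul_nonsing_inv _ hR_det, one_mul,
      nonsing_inv_mul_cancel_right _ _ hR_det]
    module
  have hERE : (E * R⁻¹ * E).PosSemidef := by
    simpa only [hE.isHermitian.eq] using hR.inv.posSemidef.mul_mul_conjTranspose_same E
  rw [expansion]
  exact hR.add_posSemidef ((hE.smul (add_nonneg hp hq)).add (hERE.smul (mul_nonneg hp hq)))

theorem posDef_smul_inv_add_smul_sub (hR : R.PosDef) (hE : E.PosSemidef) (hp : 0 ≤ p)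
    (hpq : p < q) : (q • (R + q • E)⁻¹ - p • (R + p • E)⁻¹).PosDef := by
  have hq : 0 ≤ q := hp.trans hpq.le
  rw [smul_inv_add_smul_sub_smul_inv_add_smul hR.isUnit
    (hR.add_posSemidef (hE.smul hp)).isUnit (hR.add_posSemidef (hE.smul hq)).isUnit]
  exact (posDef_add_smul_mul_inv_mul_add_smul hR hE hp hq).inv.smul (sub_pos.2 hpq)

end Matrix

theorem strictMonoOn_mul_re_dotProduct_inv_add_smul {ι 𝕜 : Type*} [Fintype ι] [DecidableEq ι]
    [RCLike 𝕜] {R E : Matrix ι ι 𝕜} (hR : R.PosDef) (hE : E.PosSemidef) {h : ι → 𝕜} (hh : h ≠ 0) :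
    StrictMonoOn (fun p : ℝ ↦ p * RCLike.re (star h ⬝ᵥ (R + (p : 𝕜) • E)⁻¹ *ᵥ h)) (Set.Ici 0) := by
  intro p hp q _ hpq
  have hdiff := posDef_smul_inv_add_smul_sub hR hE (p := (p : 𝕜)) (q := (q : 𝕜))
    (RCLike.ofReal_nonneg.2 hp) (RCLike.ofReal_lt_ofReal.2 hpq)
  have hpos := hdiff.re_dotProduct_pos hh
  simpa only [sub_mulVec, smul_mulVec, dotProduct_sub, dotProduct_smul, smul_eq_mul, map_sub,
    RCLike.re_ofReal_mul, sub_pos] using hpos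

section SINR

variable {K n : ℕ} {hhat : Fin K → Fin n → ℂ} {E : Fin K → Matrix (Fin n) (Fin n) ℂ}
  {Cz : Matrix (Fin n) (Fin n) ℂ} {P : Fin K → ℝ}

theorem posDef_Dmat (hE : ∀ j, (E j).PosSemidef) (hCz : Cz.PosDef) (hP : ∀ j, 0 ≤ P j) :
    (Dmat E Cz P).PosDef :=
  .posSemidef_add (posSemidef_sum _ fun j _ ↦ (hE j).smul (Complex.zero_le_real.2 (hP j))) hCz

theorem posDef_Omat (hE : ∀ j, (E j).PosSemidef) (hCz : Cz.PosDef) (k : Fin K)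
    (hP : ∀ j, 0 ≤ P j) : (Omat hhat E Cz k P).PosDef :=
  .posSemidef_add (posSemidef_sum _ fun j _ ↦
    (posSemidef_vecMulVec_self_star (hhat j)).smul (Complex.zero_le_real.2 (hP j)))
    (posDef_Dmat hE hCz hP)

theorem Dmat_update (E : Fin K → Matrix (Fin n) (Fin n) ℂ) (Cz : Matrix (Fin n) (Fin n) ℂ)
    (P : Fin K → ℝ) (k : Fin K) (p : ℝ) :
    Dmat E Cz (Function.update P k p) = Dmat E Cz (Function.update P k 0) + (p : ℂ) • E k := by
  have sum_update (t : ℝ) : ∑ j, (Function.update P k t j : ℂ) • E j =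
      ∑ j ∈ univ.erase k, (P j : ℂ) • E j + (t : ℂ) • E k := by
    rw [← sum_erase_add _ _ (mem_univ k), Function.update_self]
    congr 1
    exact sum_congr rfl fun j hj ↦ by rw [Function.update_of_ne (ne_of_mem_erase hj)]
  rw [Dmat, Dmat, sum_update, sum_update, Complex.ofReal_zero, zero_smul, add_zero,
    add_right_comm]

theorem Omat_update (hhat : Fin K → Fin n → ℂ) (E : Fin K → Matrix (Fin n) (Fin n) ℂ)
    (Cz : Matrix (Fin n) (Fin n) ℂ) (P : Fin K → ℝ) (k : Fin K) (p : ℝ) :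
    Omat hhat E Cz k (Function.update P k p) =
      Omat hhat E Cz k (Function.update P k 0) + (p : ℂ) • E k := by
  rw [Omat, Omat, Dmat_update, ← add_assoc]
  congr 2
  refine sum_congr rfl fun j hj ↦ ?_
  simp only [Function.update_of_ne (ne_of_mem_erase hj)]

theorem SINR_update (hhat : Fin K → Fin n → ℂ) (E : Fin K → Matrix (Fin n) (Fin n) ℂ)
    (Cz : Matrix (Fin n) (Fin n) ℂ) (P : Fin K → ℝ) (k : Fin K) (p : ℝ) :
    SINR hhat E Cz k (Function.update P k p) = p * (star (hhat k) ⬝ᵥ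
      (Omat hhat E Cz k (Function.update P k 0) + (p : ℂ) • E k)⁻¹ *ᵥ hhat k).re := by
  rw [SINR, Function.update_self, Omat_update]

theorem SINR_strictMono_own_power_general (hE : ∀ j, (E j).PosSemidef) (hCz : Cz.PosDef)
    {k : Fin K} (hk : hhat k ≠ 0) (hP : ∀ j ≠ k, 0 ≤ P j) :
    StrictMonoOn (fun p ↦ SINR hhat E Cz k (Function.update P k p)) (Set.Ici 0) := by
  have hR : (Omat hhat E Cz k (Function.update P k 0)).PosDef :=
    posDef_Omat hE hCz k <|
      (Function.forall_update_iff P fun _ x ↦ 0 ≤ x).2 ⟨le_rfl, hP⟩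
  simp only [SINR_update]
  exact strictMonoOn_mul_re_dotProduct_inv_add_smul hR (hE k) hk

end SINR

/-- **Competitiveness, first part: the uplink SINR of user `k` is strictly increasing
in user `k`'s own transmit power.**  If `ĥ_k ≠ 0` and `P`, `Q` are strictly positive
power vectors with `Q_j = P_j` for all `j ≠ k` and `Q_k > P_k`, then
`SINR_k(Q) > SINR_k(P)`. -/
theorem SINR_strictMono_own_power {K n : ℕ}
    (hhat : Fin K → Fin n → ℂ)
    (E : Fin K → Matrix (Fin n) (Fin n) ℂ) (hE : ∀ j, (E j).PosSemidef)
    (Cz : Matrix (Fin n) (Fin n) ℂ) (hCz : Cz.PosDef)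
    (k : Fin K) (hk : hhat k ≠ 0)
    (P Q : Fin K → ℝ) (hP : ∀ j, 0 < P j) (hQ : ∀ j, 0 < Q j)
    (hPQ : ∀ j, j ≠ k → Q j = P j) (hQk : P k < Q k) :
    SINR hhat E Cz k P < SINR hhat E Cz k Q := by
  have hQ_eq : Function.update P k (Q k) = Q :=
    Function.update_eq_iff.2 ⟨rfl, fun j hj ↦ (hPQ j hj).symm⟩
  simpa only [Function.update_eq_self, hQ_eq] using
    SINR_strictMono_own_power_general hE hCz hk (fun j _ ↦ (hP j).le) (hP k).le (hQ k).le hQk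

end
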